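/- arXiv:1007.2336 — 5 statements merged into one kernel-verified Lean document; each statement's English description precedes it below -/
import Mathlib

section
/- Let φ : ℝ → ℝ be any function, s ≥ 2 an integer, and let representative atoms be given as follows: integers ℓ_{−M} = −N < ℓ_{−M+1} < ⋯ < ℓ_M = N with ν_j := ℓ_j − ℓ_{j−1} ≥ s for j = −M+1, …, M, and reals Y_{−M} < ⋯ < Y_M. Define r_j := (Y_j − Y_{j−1})/ν_j, set r_{M+1} := r_{−M+1}, and let y : ℤ → ℝ be the piecewise linear interpolant y_{ℓ_{j−1}+i} := Y_{j−1} + i·r_j for 0 ≤ i ≤ ν_j, extended to all of ℤ by y_{ℓ+2N} = y_ℓ + (Y_M − Y_{−M}). Then the atomistic energy E^a(y) := Σ_{k=1}^{s} Σ_{ℓ=−N+1}^{N} φ(y_{ℓ+k−1} − y_{ℓ−1}) satisfies E^a(y) = Σ_{j=−M+1}^{M} ν_j φ_cb(r_j) + Σ_{j=−M+1}^{M} P_j, where φ_cb(r) := Σ_{k=1}^{s} φ(k r) and P_j := Σ_{k=2}^{s} Σ_{p=1}^{k−1} [ φ(p·r_j + (k−p)·r_{j+1}) − (p/k)·φ(k·r_j)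 − ((k−p)/k)·φ(k·r_{j+1}) ]. -/
/-!
Fix the interaction range `k ≤ s` and group the bonds `(ℓ - 1, ℓ + k - 1)` by the element
`(ℓ_{j-1}, ℓ_j]` containing `ℓ`. Since `ν_j ≥ s ≥ k`, a bond starting in element `j` ends in
element `j` or `j + 1`: the first `ν_j - k + 1` of them stay in element `j` and have length `k r_j`,
while each of the other `k - 1` has length `p r_j + (k - p) r_{j+1}`, with `p = 1, …, k - 1` the
number of unit cells covered in element `j` (`block_sum`). For `j = M` the element `M + 1` is the
periodic image of element `-M + 1` (`interp_next`).

It remains to write `(k - 1) φ(k r_j)`, summed over `j`, as the sum over `p` of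
`(p / k) φ(k r_j) + ((k - p) / k) φ(k r_{j+1})`. This holds because `r_{M+1} = r_{-M+1}` makes
the sums of `φ(k r_{j+1})` and of `φ(k r_j)` over one period equal (`sum_shift`).
-/

open Finset Real

noncomputable section

/-- scaled lattice spacing ε = 1/N -/
def eps (N : ℕ) : ℝ := 1 / N

/-- the index range ℓ = -N+1, …, N -/
def rng (N : ℕ) : Finset ℤ := Finset.Icc (-(N : ℤ) + 1) N

/-- 2N-periodicity of a sequence -/
def Periodic2N (N : ℕ) (u : ℤ → ℝ) : Prop := ∀ ℓ : ℤ, u (ℓ + 2 * (N : ℤ)) = u ℓ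

/-- the space 𝒰 of 2N-periodic zero-mean displacements -/
def memU (N : ℕ) (u : ℤ → ℝ) : Prop :=
  Periodic2N N u ∧ ∑ ℓ ∈ rng N, u ℓ = 0

/-- discrete differentiation operator: (Dv)_ℓ = (v_ℓ - v_{ℓ-1})/ε -/
def Dv (N : ℕ) (v : ℤ → ℝ) : ℤ → ℝ := fun ℓ => (v ℓ - v (ℓ - 1)) / eps N

/-- squared discrete ℓ²_ε norm -/
def nsq (N : ℕ) (v : ℤ → ℝ) : ℝ := eps N * ∑ ℓ ∈ rng N, v ℓ ^ 2

/-- discrete ℓ²_ε norm -/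
def nrm (N : ℕ) (v : ℤ → ℝ) : ℝ := Real.sqrt (nsq N v)

/-- squared discrete ℓ²_ε seminorm over an index set S -/
def nsqS (N : ℕ) (S : Finset ℤ) (v : ℤ → ℝ) : ℝ := eps N * ∑ ℓ ∈ S, v ℓ ^ 2

/-- discrete ℓ²_ε seminorm over an index set S -/
def nrmS (N : ℕ) (S : Finset ℤ) (v : ℤ → ℝ) : ℝ := Real.sqrt (nsqS N S v)

/-- discrete ℓ^∞ norm over an index set S -/
def linf (S : Finset ℤ) (v : ℤ → ℝ) : ℝ := sSup ((fun ℓ => |v ℓ|) '' (S : Set ℤ))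

/-- the interfacial index set 𝒜_qnl(k) -/
def Aqnl (K : ℤ) (k : ℕ) : Finset ℤ := Finset.Icc (-K - (k : ℤ) + 1) (K + 1)

/-- the continuum index set 𝒞_qnl(k) -/
def Cqnl (N : ℕ) (K : ℤ) (k : ℕ) : Finset ℤ :=
  Finset.Icc (-(N : ℤ) + 1) (-K - (k : ℤ)) ∪ Finset.Icc (K + 2) (N : ℤ)

/-- the interface ℐ_qnl(k) between continuum and atomistic regions -/
def Iqnl (K : ℤ) (k : ℕ) : Finset ℤ :=
  Finset.Icc (-K - (k : ℤ) + 1) (-K - 1) ∪ Finset.Icc (K + 2) (K + (k : ℤ))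

/-- the extended continuum region 𝒞̃_qnl(k) = 𝒞_qnl(k) ∪ ℐ_qnl(k) -/
def Ctil (N : ℕ) (K : ℤ) (k : ℕ) : Finset ℤ := Cqnl N K k ∪ Iqnl K k

/-- A sum over `(a m, a n]` splits into the sums over the blocks `(a (j - 1), a j]`. -/
lemma sum_blocks (f : ℤ → ℝ) (a : ℤ → ℤ) (m n : ℤ) (hmn : m ≤ n)
    (ha : ∀ j ∈ Finset.Icc (m + 1) n, a (j - 1) ≤ a j) :
    a m ≤ a n ∧ ∑ l ∈ Finset.Icc (a m + 1) (a n), f l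
      = ∑ j ∈ Finset.Icc (m + 1) n, ∑ l ∈ Finset.Icc (a (j - 1) + 1) (a j), f l := by
  induction n, hmn using Int.leInduction with
  | base => simp
  | succ n hmn ih =>
    obtain ⟨h1, h2⟩ := ih (fun j hj => ha j (by simp at hj ⊢; omega))
    have h3 := ha (n + 1) (by simp; omega)
    rw [add_sub_cancel_right] at h3
    refine ⟨h1.trans h3, ?_⟩
    have e1 : Finset.Icc (m + 1) (n + 1) = insert (n + 1) (Finset.Icc (m + 1) n) := by
      ext x; simp; omega
    have e2 : Finset.Icc (a m + 1) (a (n + 1))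
        = Finset.Icc (a n + 1) (a (n + 1)) ∪ Finset.Icc (a m + 1) (a n) := by
      ext x; simp; omega
    rw [e1, Finset.sum_insert (by simp), ← h2, e2, Finset.sum_union, add_sub_cancel_right]
    rw [Finset.disjoint_left]
    intro x hx hx'
    simp at hx hx'
    omega

/-- Telescoping: shifting the summation index changes a sum only by its boundary terms. -/
lemma sum_shift (g : ℤ → ℝ) (m n : ℤ) (hmn : m ≤ n) :
    ∑ j ∈ Finset.Icc (m + 1) n, g (j + 1)
      = (∑ j ∈ Finset.Icc (m + 1) n, g j) + g (n + 1) - g (m + 1) := by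
  induction n, hmn using Int.leInduction with
  | base => simp
  | succ n hmn ih =>
    have e1 : Finset.Icc (m + 1) (n + 1) = insert (n + 1) (Finset.Icc (m + 1) n) := by
      ext x; simp; omega
    rw [e1, Finset.sum_insert (by simp), Finset.sum_insert (by simp), ih]
    ring

/-- The bonds of range `k` starting in one element `(a, b]`, when `y` has slope `r₁` on that element
and slope `r₂` on the `k` cells following it. -/
lemma block_sum (φ : ℝ → ℝ) (y : ℤ → ℝ) (a b : ℤ) (k : ℕ) (hk : 1 ≤ k) (hab : (k : ℤ) ≤ b - a)
    (A r₁ r₂ : ℝ)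
    (h1 : ∀ i : ℤ, 0 ≤ i → i ≤ b - a → y (a + i) = A + (i : ℝ) * r₁)
    (h2 : ∀ i : ℤ, 0 ≤ i → i ≤ k → y (b + i) = y b + (i : ℝ) * r₂) :
    ∑ l ∈ Finset.Icc (a + 1) b, φ (y (l + (k : ℤ) - 1) - y (l - 1))
      = (((b - a : ℤ) : ℝ) - k + 1) * φ ((k : ℝ) * r₁)
        + ∑ p ∈ Finset.Icc 1 (k - 1), φ ((p : ℝ) * r₁ + ((k : ℝ) - (p : ℝ)) * r₂) := by
  have h1' : ∀ l : ℤ, a ≤ l → l ≤ b → y l = A + ((l : ℝ) - a) * r₁ := by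
    intro l hl hl'
    have := h1 (l - a) (by omega) (by omega)
    push_cast at this
    rwa [add_sub_cancel] at this
  have h2' : ∀ l : ℤ, b ≤ l → l ≤ b + k → y l = y b + ((l : ℝ) - b) * r₂ := by
    intro l hl hl'
    have := h2 (l - b) (by omega) (by omega)
    push_cast at this
    rwa [add_sub_cancel] at this
  have e : Finset.Icc (a + 1) b
      = Finset.Icc (a + 1) (b - k + 1) ∪ Finset.Icc (b - k + 2) b := by
    ext x; simp; omega
  have hd : Disjoint (Finset.Icc (a + 1) (b - k + 1)) (Finset.Icc (b - (k : ℤ) + 2) b) := by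
    rw [Finset.disjoint_left]
    intro x hx hx'
    simp at hx hx'
    omega
  rw [e, Finset.sum_union hd]
  congr 1
  · have : ∀ l ∈ Finset.Icc (a + 1) (b - k + 1),
        φ (y (l + (k : ℤ) - 1) - y (l - 1)) = φ ((k : ℝ) * r₁) := by
      intro l hl
      rw [Finset.mem_Icc] at hl
      rw [h1' _ (by omega) (by omega), h1' (l - 1) (by omega) (by omega)]
      congr 1
      push_cast
      ring
    rw [Finset.sum_congr rfl this, Finset.sum_const, Int.card_Icc, nsmul_eq_mul]
    congr 1
    have h : (((b - k + 1 + 1 - (a + 1)).toNat : ℤ) : ℝ) = ((b - k + 1 + 1 - (a + 1) : ℤ) : ℝ) := by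
      rw [Int.toNat_of_nonneg (by omega)]
    rw [Int.cast_natCast] at h
    rw [h]
    push_cast
    ring
  · symm
    -- The bond starting at `l - 1 = b - p` covers exactly `p` cells of the element.
    refine Finset.sum_bij (fun p _ => b + 1 - (p : ℤ)) ?_ ?_ ?_ ?_
    · intro p hp
      simp at hp ⊢
      omega
    · intro p _ q _ h
      simpa using h
    · intro l hl
      simp at hl
      refine ⟨(b + 1 - l).toNat, ?_, ?_⟩
      · simp; omega
      · omega
    · intro p hp
      rw [Finset.mem_Icc] at hp
      rw [h2' _ (by omega) (by omega), h1' b (by omega) (by omega),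
        h1' (b + 1 - p - 1) (by omega) (by omega)]
      congr 1
      push_cast
      ring

/-- Averaging over the splittings `k = p + (k - p)`: the weights `p / k` and `(k - p) / k` each add
up to `(k - 1) / 2`. -/
lemma sum_weights (k : ℕ) (hk : 1 ≤ k) (u v : ℝ) :
    ∑ p ∈ Finset.Icc 1 (k - 1), ((p : ℝ) / k * u + ((k : ℝ) - p) / k * v)
      = ((k : ℝ) - 1) / 2 * u + ((k : ℝ) - 1) / 2 * v := by
  have h : ∀ n : ℕ, ∑ p ∈ Finset.Icc 1 n, (p : ℝ) = n * (n + 1) / 2 := by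
    intro n
    induction n with
    | zero => simp
    | succ n ih => rw [Finset.sum_Icc_succ_top (by omega), ih]; push_cast; ring
  have hk0 : (k : ℝ) ≠ 0 := by positivity
  have hp : ∀ p : ℕ, (p : ℝ) / k * u + ((k : ℝ) - p) / k * v = p * ((u - v) / k) + v := by
    intro p
    field_simp
    ring
  simp only [hp]
  rw [Finset.sum_add_distrib, ← Finset.sum_mul, h, Finset.sum_const, nsmul_eq_mul, Nat.card_Icc,
    Nat.add_sub_cancel, Nat.cast_sub hk]
  field_simp
  push_cast
  ring

/-- Past the node `ℓ_j` the interpolant has slope `r_{j+1}` for at least `s` cells; at `j = M` this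
is periodicity. -/
lemma interp_next (N M : ℕ) (hM : 0 < M) (s : ℕ)
    (ℓidx : ℤ → ℤ) (Y : ℤ → ℝ) (r : ℤ → ℝ) (y : ℤ → ℝ)
    (hl0 : ℓidx (-(M : ℤ)) = -(N : ℤ)) (hlM : ℓidx (M : ℤ) = (N : ℤ))
    (hν : ∀ j ∈ Finset.Icc (-(M : ℤ) + 1) (M : ℤ), (s : ℤ) ≤ ℓidx j - ℓidx (j - 1))
    (hrM : r ((M : ℤ) + 1) = r (-(M : ℤ) + 1))
    (hy : ∀ j ∈ Finset.Icc (-(M : ℤ) + 1) (M : ℤ), ∀ i : ℤ, 0 ≤ i → i ≤ ℓidx j - ℓidx (j - 1) →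
        y (ℓidx (j - 1) + i) = Y (j - 1) + (i : ℝ) * r j)
    (hyper : ∀ ℓ : ℤ, y (ℓ + 2 * (N : ℤ)) = y ℓ + (Y (M : ℤ) - Y (-(M : ℤ))))
    (j : ℤ) (hj : j ∈ Finset.Icc (-(M : ℤ) + 1) (M : ℤ)) (i : ℤ) (hi : 0 ≤ i) (his : i ≤ s) :
    y (ℓidx j + i) = y (ℓidx j) + (i : ℝ) * r (j + 1) := by
  rw [Finset.mem_Icc] at hj
  rcases hj.2.lt_or_eq with hlt | rfl
  · have hm : j + 1 ∈ Finset.Icc (-(M : ℤ) + 1) (M : ℤ) := by simp; omega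
    have h1 := hν _ hm
    have h2 := hy _ hm i hi (by omega)
    have h3 := hy _ hm 0 le_rfl (by omega)
    simp only [add_sub_cancel_right, add_zero, Int.cast_zero, zero_mul] at h2 h3
    rw [h2, h3]
  · have hm : -(M : ℤ) + 1 ∈ Finset.Icc (-(M : ℤ) + 1) (M : ℤ) := by simp; omega
    have h1 := hν _ hm
    have h2 := hy _ hm i hi (by omega)
    have h3 := hy _ hm 0 le_rfl (by omega)
    simp only [add_sub_cancel_right, add_zero, Int.cast_zero, zero_mul] at h2 h3
    rw [hl0] at h2 h3
    have e1 := hyper (-N + i)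
    have e2 := hyper (-N)
    rw [show -(N : ℤ) + i + 2 * N = N + i by ring] at e1
    rw [show -(N : ℤ) + 2 * N = N by ring] at e2
    rw [hlM, hrM, e1, e2, h2, h3]
    ring

/-- decomposition of the atomistic energy of a piecewise linear interpolant
into the coarse-grained local QC energy plus interfacial energies. -/
theorem localQC_decomposition (N M : ℕ) (hN : 0 < N) (hM : 0 < M)
    (s : ℕ) (hs : 2 ≤ s) (φ : ℝ → ℝ)
    (ℓidx : ℤ → ℤ) (Y : ℤ → ℝ) (r : ℤ → ℝ) (y : ℤ → ℝ)
    (hl0 : ℓidx (-(M : ℤ)) = -(N : ℤ)) (hlM : ℓidx (M : ℤ) = (N : ℤ))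
    (hmono : ∀ j ∈ Finset.Icc (-(M : ℤ) + 1) (M : ℤ), ℓidx (j - 1) < ℓidx j)
    (hν : ∀ j ∈ Finset.Icc (-(M : ℤ) + 1) (M : ℤ), (s : ℤ) ≤ ℓidx j - ℓidx (j - 1))
    (hY : ∀ j ∈ Finset.Icc (-(M : ℤ) + 1) (M : ℤ), Y (j - 1) < Y j)
    (hr : ∀ j ∈ Finset.Icc (-(M : ℤ) + 1) (M : ℤ),
        r j = (Y j - Y (j - 1)) / ((ℓidx j - ℓidx (j - 1) : ℤ) : ℝ))
    (hrM : r ((M : ℤ) + 1) = r (-(M : ℤ) + 1))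
    (hy : ∀ j ∈ Finset.Icc (-(M : ℤ) + 1) (M : ℤ), ∀ i : ℤ, 0 ≤ i → i ≤ ℓidx j - ℓidx (j - 1) →
        y (ℓidx (j - 1) + i) = Y (j - 1) + (i : ℝ) * r j)
    (hyper : ∀ ℓ : ℤ, y (ℓ + 2 * (N : ℤ)) = y ℓ + (Y (M : ℤ) - Y (-(M : ℤ)))) :
    (∑ k ∈ Finset.Icc 1 s, ∑ ℓ ∈ rng N, φ (y (ℓ + (k : ℤ) - 1) - y (ℓ - 1)))
      = (∑ j ∈ Finset.Icc (-(M : ℤ) + 1) (M : ℤ),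
          ((ℓidx j - ℓidx (j - 1) : ℤ) : ℝ) * ∑ k ∈ Finset.Icc 1 s, φ ((k : ℝ) * r j))
        + ∑ j ∈ Finset.Icc (-(M : ℤ) + 1) (M : ℤ), ∑ k ∈ Finset.Icc 2 s, ∑ p ∈ Finset.Icc 1 (k - 1),
            (φ ((p : ℝ) * r j + ((k : ℝ) - (p : ℝ)) * r (j + 1))
              - ((p : ℝ) / (k : ℝ)) * φ ((k : ℝ) * r j)
              - (((k : ℝ) - (p : ℝ)) / (k : ℝ)) * φ ((k : ℝ) * r (j + 1))) := by
  have hMM : -(M : ℤ) ≤ M := by omega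
  have key : ∀ k ∈ Finset.Icc 1 s,
      ∑ ℓ ∈ rng N, φ (y (ℓ + (k : ℤ) - 1) - y (ℓ - 1))
        = ∑ j ∈ Finset.Icc (-(M : ℤ) + 1) (M : ℤ),
          (((ℓidx j - ℓidx (j - 1) : ℤ) : ℝ) * φ ((k : ℝ) * r j)
            + ∑ p ∈ Finset.Icc 1 (k - 1),
              (φ ((p : ℝ) * r j + ((k : ℝ) - (p : ℝ)) * r (j + 1))
              - ((p : ℝ) / (k : ℝ)) * φ ((k : ℝ) * r j)
              - (((k : ℝ) - (p : ℝ)) / (k : ℝ)) * φ ((k : ℝ) * r (j + 1)))) := by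
    intro k hk
    rw [Finset.mem_Icc] at hk
    have hb := (sum_blocks (fun ℓ => φ (y (ℓ + (k : ℤ) - 1) - y (ℓ - 1))) ℓidx (-(M : ℤ)) M hMM
      (fun j hj => (hmono j hj).le)).2
    rw [hl0, hlM] at hb
    rw [rng, hb]
    have hblock : ∀ j ∈ Finset.Icc (-(M : ℤ) + 1) (M : ℤ),
        ∑ ℓ ∈ Finset.Icc (ℓidx (j - 1) + 1) (ℓidx j), φ (y (ℓ + (k : ℤ) - 1) - y (ℓ - 1))
          = (((ℓidx j - ℓidx (j - 1) : ℤ) : ℝ) * φ ((k : ℝ) * r j)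
            + ∑ p ∈ Finset.Icc 1 (k - 1),
              (φ ((p : ℝ) * r j + ((k : ℝ) - (p : ℝ)) * r (j + 1))
              - ((p : ℝ) / (k : ℝ)) * φ ((k : ℝ) * r j)
              - (((k : ℝ) - (p : ℝ)) / (k : ℝ)) * φ ((k : ℝ) * r (j + 1))))
            + ((k : ℝ) - 1) / 2 * (φ ((k : ℝ) * r (j + 1)) - φ ((k : ℝ) * r j)) := by
      intro j hj
      have hνj := hν j hj
      rw [block_sum φ y (ℓidx (j - 1)) (ℓidx j) k hk.1 (by omega) (Y (j - 1)) (r j) (r (j + 1))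
        (hy j hj) (fun i hi hik => interp_next N M hM s ℓidx Y r y hl0 hlM hν hrM hy hyper j hj i hi
          (by omega))]
      have hw := sum_weights k hk.1 (φ ((k : ℝ) * r j)) (φ ((k : ℝ) * r (j + 1)))
      simp only [sub_sub]
      rw [Finset.sum_sub_distrib, hw]
      ring
    have hs := sum_shift (fun j => φ ((k : ℝ) * r j)) (-(M : ℤ)) M hMM
    simp only [hrM] at hs
    rw [Finset.sum_congr rfl hblock, Finset.sum_add_distrib, ← Finset.mul_sum,
      Finset.sum_sub_distrib, hs]
    ring
  rw [Finset.sum_congr rfl key, Finset.sum_comm, ← Finset.sum_add_distrib]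
  refine Finset.sum_congr rfl fun j _ => ?_
  rw [Finset.sum_add_distrib, Finset.mul_sum]
  congr 1
  -- For `k = 1` the sum over `p` is empty.
  symm
  refine Finset.sum_subset (Finset.Icc_subset_Icc_left (by norm_num)) fun k hk hk' => ?_
  obtain rfl : k = 1 := by
    simp at hk hk'
    omega
  simp
end
end

section
/- Let k ≥ 2 be an integer and let φ : ℝ → ℝ be twice continuously differentiable. Then for all real numbers r and R there exists η ∈ [0, 1] such that Σ_{p=1}^{k−1} [ φ(p·r + (k−p)·R) − (p/k)·φ(k·r) − ((k−p)/k)·φ(k·R) ] = ((−k³ + k)/12) · φ''( k(η·r + (1−η)·R) ) · (R − r)². -/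
/-!
Put `g s = φ (k (s r + (1 - s) R))`, so that the `p`-th summand is the interpolation defect
`g s - s g(1) - (1 - s) g(0)` at `s = p / k`. If `c ≤ g''` on `[0, 1]`, then `g s - c s² / 2` is
convex there and the defect is at most `-c s (1 - s) / 2` (`interp_defect_le`); upper bounds on
`g''` give the reverse inequality. Summing with `∑ p (k - p) = (k³ - k) / 6`, the left-hand side
lies between the values of the right-hand side at the points where `g''` attains its minimum and
its maximum on `[0, 1]`, and the intermediate value theorem provides `η`.
-/

open Finset Real

noncomputable section

/-- A lower bound `c` on the second derivative bounds the error of linear interpolation on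
`[0, 1]`, because `g s - c s² / 2` is convex. -/
lemma interp_defect_le {g g' g'' : ℝ → ℝ} (h1 : ∀ s, HasDerivAt g (g' s) s)
    (h2 : ∀ s, HasDerivAt g' (g'' s) s) {c : ℝ} (hc : ∀ s ∈ Set.Icc (0 : ℝ) 1, c ≤ g'' s)
    {s : ℝ} (hs : s ∈ Set.Icc (0 : ℝ) 1) :
    g s - s * g 1 - (1 - s) * g 0 ≤ -c / 2 * (s * (1 - s)) := by
  have hd1 : ∀ x, HasDerivAt (fun x => g x - c / 2 * x ^ 2) (g' x - c * x) x := fun x => by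
    refine ((h1 x).sub ((hasDerivAt_pow 2 x).const_mul (c / 2))).congr_deriv ?_
    norm_num
    ring
  have hd2 : ∀ x, HasDerivAt (fun x => g' x - c * x) (g'' x - c) x := fun x => by
    refine ((h2 x).sub ((hasDerivAt_id x).const_mul c)).congr_deriv ?_
    ring
  have hconv : ConvexOn ℝ (Set.Icc (0 : ℝ) 1) (fun x => g x - c / 2 * x ^ 2) := by
    refine convexOn_of_hasDerivWithinAt2_nonneg (convex_Icc 0 1)
      (fun x _ => (hd1 x).continuousAt.continuousWithinAt)
      (fun x _ => (hd1 x).hasDerivWithinAt) (fun x _ => (hd2 x).hasDerivWithinAt)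
      (fun x hx => sub_nonneg.2 (hc x (interior_subset hx)))
  have := hconv.2 (x := 1) (y := 0) (by simp) (by simp) hs.1 (sub_nonneg.2 hs.2)
    (add_sub_cancel s 1)
  simp only [smul_eq_mul, mul_one, mul_zero, add_zero] at this
  nlinarith

lemma sum_Icc_mul_sub (n : ℕ) (x : ℝ) :
    ∑ p ∈ Finset.Icc 1 n, (p : ℝ) * (x - p)
      = x * (n * (n + 1) / 2) - n * (n + 1) * (2 * n + 1) / 6 := by
  induction n with
  | zero => simp
  | succ n ih =>
    rw [Finset.sum_Icc_succ_top (by omega), ih]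
    push_cast
    ring

/-- Taylor-expansion representation of the interfacial energy term P_j. -/
theorem interfacial_energy_taylor (k : ℕ) (hk : 2 ≤ k)
    (φ : ℝ → ℝ) (hφ : ContDiff ℝ 2 φ) (r R : ℝ) :
    ∃ η : ℝ, η ∈ Set.Icc (0 : ℝ) 1 ∧
      (∑ p ∈ Finset.Icc 1 (k - 1),
          (φ ((p : ℝ) * r + ((k : ℝ) - (p : ℝ)) * R)
            - ((p : ℝ) / (k : ℝ)) * φ ((k : ℝ) * r)
            - (((k : ℝ) - (p : ℝ)) / (k : ℝ)) * φ ((k : ℝ) * R)))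
        = ((-(k : ℝ) ^ 3 + (k : ℝ)) / 12)
            * iteratedDeriv 2 φ ((k : ℝ) * (η * r + (1 - η) * R)) * (R - r) ^ 2 := by
  have hk0 : (0 : ℝ) < k := by exact_mod_cast (by omega : 0 < k)
  set L : ℝ → ℝ := fun s => (k : ℝ) * (s * r + (1 - s) * R) with hL
  set d : ℝ := (k : ℝ) * (r - R) with hd
  have hLd : ∀ s, HasDerivAt L d s := fun s => by
    have h := (((hasDerivAt_id s).mul_const r).add
      (((hasDerivAt_id s).const_sub 1).mul_const R)).const_mul (k : ℝ)
    refine h.congr_deriv ?_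
    rw [hd]
    ring
  have hφ1 : ∀ x, HasDerivAt φ (deriv φ x) x := fun x =>
    ((hφ.differentiable (by norm_num)) x).hasDerivAt
  have hφ2 : ∀ x, HasDerivAt (deriv φ) (iteratedDeriv 2 φ x) x := fun x => by
    have h := (hφ.differentiable_iteratedDeriv 1 (by norm_num)) x
    rw [iteratedDeriv_one] at h
    have h' := h.hasDerivAt
    rwa [← iteratedDeriv_one, ← iteratedDeriv_succ, iteratedDeriv_one] at h'
  set g : ℝ → ℝ := fun s => φ (L s) with hg
  set w : ℝ → ℝ := fun s => iteratedDeriv 2 φ (L s) * d * d with hw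
  have hg1 : ∀ s, HasDerivAt g (deriv φ (L s) * d) s := fun s => (hφ1 (L s)).comp s (hLd s)
  have hg2 : ∀ s, HasDerivAt (fun s => deriv φ (L s) * d) (w s) s := fun s =>
    ((hφ2 (L s)).comp s (hLd s)).mul_const d
  have hwc : Continuous w := by
    have h := hφ.continuous_iteratedDeriv 2 le_rfl
    have hLc : Continuous L := continuous_iff_continuousAt.2 fun s => (hLd s).continuousAt
    exact ((h.comp hLc).mul continuous_const).mul continuous_const
  -- The right-hand side equals `-(κ / 2) * w η`, where `κ = ∑ s (1 - s)` over `s = p / k`.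
  set κ : ℝ := ∑ p ∈ Finset.Icc 1 (k - 1), ((p : ℝ) / k * (1 - (p : ℝ) / k)) with hκ
  have hκv : κ = ((k : ℝ) ^ 3 - k) / 6 / k ^ 2 := by
    have h : κ = (∑ p ∈ Finset.Icc 1 (k - 1), (p : ℝ) * (k - p)) / k ^ 2 := by
      rw [hκ, Finset.sum_div]
      refine Finset.sum_congr rfl fun p _ => ?_
      field_simp
    rw [h, sum_Icc_mul_sub, Nat.cast_sub (by omega)]
    congr 1
    push_cast
    ring
  have hrhs : ∀ η, ((-(k : ℝ) ^ 3 + (k : ℝ)) / 12)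
      * iteratedDeriv 2 φ ((k : ℝ) * (η * r + (1 - η) * R)) * (R - r) ^ 2
      = -w η / 2 * κ := fun η => by
    simp only [hw, hκv, hL, hd]
    field_simp
    ring
  have hlhs : (∑ p ∈ Finset.Icc 1 (k - 1),
          (φ ((p : ℝ) * r + ((k : ℝ) - (p : ℝ)) * R)
            - ((p : ℝ) / (k : ℝ)) * φ ((k : ℝ) * r)
            - (((k : ℝ) - (p : ℝ)) / (k : ℝ)) * φ ((k : ℝ) * R)))
      = ∑ p ∈ Finset.Icc 1 (k - 1), (g ((p : ℝ) / k) - (p : ℝ) / k * g 1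
          - (1 - (p : ℝ) / k) * g 0) := by
    refine Finset.sum_congr rfl fun p _ => ?_
    have e1 : L ((p : ℝ) / k) = (p : ℝ) * r + ((k : ℝ) - (p : ℝ)) * R := by
      simp only [hL]
      field_simp
    have e2 : L 1 = k * r := by simp [hL]
    have e3 : L 0 = k * R := by simp [hL]
    have e4 : ((k : ℝ) - p) / k = 1 - (p : ℝ) / k := by field_simp
    simp only [hg, e1, e2, e3, e4]
  have hmem : ∀ p ∈ Finset.Icc 1 (k - 1), (p : ℝ) / k ∈ Set.Icc (0 : ℝ) 1 := fun p hp => by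
    rw [Finset.mem_Icc] at hp
    have : (p : ℝ) ≤ k := by exact_mod_cast (by omega : p ≤ k)
    exact ⟨by positivity, (div_le_one hk0).2 this⟩
  obtain ⟨a, ha, hamin⟩ := isCompact_Icc.exists_isMinOn
    (Set.nonempty_Icc.2 (zero_le_one (α := ℝ))) hwc.continuousOn
  obtain ⟨b, hb, hbmax⟩ := isCompact_Icc.exists_isMaxOn
    (Set.nonempty_Icc.2 (zero_le_one (α := ℝ))) hwc.continuousOn
  rw [hlhs]
  simp only [hrhs]
  set S := ∑ p ∈ Finset.Icc 1 (k - 1), (g ((p : ℝ) / k) - (p : ℝ) / k * g 1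
          - (1 - (p : ℝ) / k) * g 0) with hS
  have hup : S ≤ -w a / 2 * κ := by
    rw [hS, hκ, Finset.mul_sum]
    exact Finset.sum_le_sum fun p hp =>
      interp_defect_le hg1 hg2 (fun s hs => hamin hs) (hmem p hp)
  have hlo : -w b / 2 * κ ≤ S := by
    rw [hS, hκ, Finset.mul_sum]
    refine Finset.sum_le_sum fun p hp => ?_
    have h := interp_defect_le (g := fun s => -g s) (fun s => (hg1 s).fun_neg)
      (fun s => (hg2 s).fun_neg) (c := -w b) (fun s hs => neg_le_neg (hbmax hs)) (hmem p hp)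
    linarith
  obtain ⟨η, hη, hval⟩ := isPreconnected_Icc.intermediate_value hb ha
    (f := fun η => -w η / 2 * κ) (by fun_prop) ⟨hlo, hup⟩
  exact ⟨η, hη, hval.symm⟩
end
end

section
/- The generalized quasi-nonlocal (QNL) energy has no ghost forces: for every w ∈ U, the function t ↦ E^qnl(y_F + t·w) has derivative 0 at t = 0, i.e. the uniform deformation y_F is an equilibrium of the QNL model. -/
/-!
At the uniform deformation every bond of range `k` is stretched to exactly `k F`, whether it is
treated atomistically or by the Cauchy-Born rule. Hence the first variation in the direction `w`
is `φ'(k F)` times the sum of `∑ j < k, w'_{ℓ+j}` over the atomistic and continuum index sets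
together. These two sets partition one full period (`sum_Aqnl_add_sum_Cqnl`), and the
sum of the shifted difference quotients of a periodic sequence over a period telescopes to zero
(`sum_rng_Dv_shift`).
-/

open Finset Real

noncomputable section

/-- the generalized QNL energy with up to s-th nearest-neighbor interactions -/
def Eqnl (N : ℕ) (s : ℕ) (K : ℤ) (φ : ℝ → ℝ) (y : ℤ → ℝ) : ℝ :=
  eps N * ∑ ℓ ∈ rng N, φ (Dv N y ℓ)
    + eps N * ∑ k ∈ Finset.Icc 2 s, ∑ ℓ ∈ Aqnl K k,
        φ (∑ j ∈ Finset.range k, Dv N y (ℓ + (j : ℤ)))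
    + eps N * ∑ k ∈ Finset.Icc 2 s, ∑ ℓ ∈ Cqnl N K k,
        (1 / (k : ℝ)) * ∑ j ∈ Finset.range k, φ ((k : ℝ) * Dv N y (ℓ + (j : ℤ)))

lemma sum_rng_Dv_shift (N : ℕ) (w : ℤ → ℝ) (hw : Periodic2N N w) (j : ℤ) :
    ∑ ℓ ∈ rng N, Dv N w (ℓ + j) = 0 := by
  have tele : ∀ (n : ℕ) (a : ℤ),
      ∑ ℓ ∈ Finset.Icc (a + 1) (a + n), (w (ℓ + j) - w (ℓ + j - 1)) = w (a + n + j) - w (a + j) := by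
    intro n a
    induction n with
    | zero => simp
    | succ n ih =>
      have hIcc : Finset.Icc (a + 1) (a + ((n + 1 : ℕ) : ℤ))
          = insert (a + n + 1) (Finset.Icc (a + 1) (a + n)) := by
        ext x
        simp only [Finset.mem_Icc, Finset.mem_insert]
        omega
      rw [hIcc, Finset.sum_insert (by simp), ih]
      have h1 : a + (n : ℤ) + 1 + j - 1 = a + n + j := by ring
      have h2 : a + ((n + 1 : ℕ) : ℤ) + j = a + n + 1 + j := by push_cast; ring
      rw [h1, h2]
      ring
  have h := tele (2 * N) (-(N : ℤ))
  have e1 : -(N : ℤ) + ((2 * N : ℕ) : ℤ) = N := by push_cast; ring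
  have e2 : (N : ℤ) + j = (-(N : ℤ) + j) + 2 * N := by ring
  rw [e1, e2, hw, sub_self] at h
  simp only [Dv, rng]
  rw [← Finset.sum_div, h, zero_div]

/-- The sets `Aqnl K k` and `Cqnl N K k` partition one period. -/
lemma sum_Aqnl_add_sum_Cqnl (N : ℕ) (K : ℤ) (k : ℕ) (hK : 1 ≤ K) (hk : 2 ≤ k)
    (hKN : K + k ≤ N) (f : ℤ → ℝ) :
    ∑ ℓ ∈ Aqnl K k, f ℓ + ∑ ℓ ∈ Cqnl N K k, f ℓ = ∑ ℓ ∈ rng N, f ℓ := by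
  have hd : Disjoint (Aqnl K k) (Cqnl N K k) := by
    rw [Finset.disjoint_left]
    intro x
    simp only [Aqnl, Cqnl, Finset.mem_union, Finset.mem_Icc]
    omega
  rw [← Finset.sum_union hd]
  congr 1
  ext x
  simp only [Aqnl, Cqnl, rng, Finset.mem_union, Finset.mem_Icc]
  omega

lemma Dv_affine (N : ℕ) (hN : 0 < N) (F t : ℝ) (w : ℤ → ℝ) (ℓ : ℤ) :
    Dv N (fun ℓ => F * eps N * (ℓ : ℝ) + t * w ℓ) ℓ = F + t * Dv N w ℓ := by
  have h : eps N ≠ 0 := by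
    have : (N : ℝ) ≠ 0 := by exact_mod_cast hN.ne'
    simp [eps, this]
  simp only [Dv]
  field_simp
  push_cast
  ring

lemma hasDerivAt_comp_line (φ : ℝ → ℝ) (hφ : ContDiff ℝ 1 φ) (a b : ℝ) :
    HasDerivAt (fun t : ℝ => φ (a + t * b)) (deriv φ a * b) 0 := by
  have h1 : HasDerivAt (fun t : ℝ => a + t * b) b 0 := by
    simpa using ((hasDerivAt_id (0 : ℝ)).mul_const b).const_add a
  have h2 : HasDerivAt φ (deriv φ a) (a + 0 * b) := by
    simpa using (hφ.differentiable (by norm_num) a).hasDerivAt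
  exact h2.comp (0 : ℝ) h1

/-- the generalized QNL energy has no ghost forces: the uniform deformation
y_F is an equilibrium of the QNL model. -/
theorem qnl_no_ghost_force (N : ℕ) (hN : 0 < N) (s : ℕ) (hs : 2 ≤ s)
    (K : ℤ) (hK1 : 1 ≤ K) (hK2 : K ≤ (N : ℤ) - (s : ℤ))
    (φ : ℝ → ℝ) (hφ : ContDiff ℝ 1 φ) (F : ℝ)
    (w : ℤ → ℝ) (hw : memU N w) :
    HasDerivAt (fun t : ℝ =>
        Eqnl N s K φ (fun ℓ => F * eps N * (ℓ : ℝ) + t * w ℓ)) 0 0 := by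
  have hper := hw.1
  simp only [Eqnl, Dv_affine N hN]
  have hNN : HasDerivAt (fun t : ℝ => ∑ ℓ ∈ rng N, φ (F + t * Dv N w ℓ))
      (∑ ℓ ∈ rng N, deriv φ F * Dv N w ℓ) 0 :=
    HasDerivAt.fun_sum fun ℓ _ => hasDerivAt_comp_line φ hφ F _
  have hA : HasDerivAt (fun t : ℝ => ∑ k ∈ Finset.Icc 2 s, ∑ ℓ ∈ Aqnl K k,
        φ (∑ j ∈ Finset.range k, (F + t * Dv N w (ℓ + (j : ℤ)))))
      (∑ k ∈ Finset.Icc 2 s, ∑ ℓ ∈ Aqnl K k,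
        deriv φ (k * F) * ∑ j ∈ Finset.range k, Dv N w (ℓ + (j : ℤ))) 0 := by
    refine HasDerivAt.fun_sum fun k _ => HasDerivAt.fun_sum fun ℓ _ => ?_
    simpa [Finset.sum_add_distrib, ← Finset.mul_sum] using
      hasDerivAt_comp_line φ hφ (k * F) (∑ j ∈ Finset.range k, Dv N w (ℓ + (j : ℤ)))
  have hC : HasDerivAt (fun t : ℝ => ∑ k ∈ Finset.Icc 2 s, ∑ ℓ ∈ Cqnl N K k,
        (1 / (k : ℝ)) * ∑ j ∈ Finset.range k, φ ((k : ℝ) * (F + t * Dv N w (ℓ + (j : ℤ)))))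
      (∑ k ∈ Finset.Icc 2 s, ∑ ℓ ∈ Cqnl N K k,
        deriv φ (k * F) * ∑ j ∈ Finset.range k, Dv N w (ℓ + (j : ℤ))) 0 := by
    refine HasDerivAt.fun_sum fun k hk => HasDerivAt.fun_sum fun ℓ _ => ?_
    have hk0 : (k : ℝ) ≠ 0 := by
      have := (Finset.mem_Icc.mp hk).1
      exact_mod_cast (by omega : k ≠ 0)
    have h : HasDerivAt
        (fun t : ℝ => ∑ j ∈ Finset.range k, φ ((k : ℝ) * (F + t * Dv N w (ℓ + (j : ℤ)))))
        (∑ j ∈ Finset.range k, deriv φ (k * F) * (k * Dv N w (ℓ + (j : ℤ)))) 0 := by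
      refine HasDerivAt.fun_sum fun j _ => ?_
      have := hasDerivAt_comp_line φ hφ (k * F) (k * Dv N w (ℓ + (j : ℤ)))
      refine this.congr_of_eventuallyEq (Filter.Eventually.of_forall fun t => ?_)
      simp only []
      congr 1
      ring
    -- The factor `k` from the chain rule cancels the Cauchy-Born weight `1 / k`.
    refine (h.const_mul (1 / (k : ℝ))).congr_deriv ?_
    rw [Finset.mul_sum, Finset.mul_sum]
    refine Finset.sum_congr rfl fun j _ => ?_
    field_simp
  refine (((hNN.const_mul (eps N)).add (hA.const_mul (eps N))).add
    (hC.const_mul (eps N))).congr_deriv ?_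
  have z1 : ∑ ℓ ∈ rng N, deriv φ F * Dv N w ℓ = 0 := by
    have := sum_rng_Dv_shift N w hper 0
    simp only [add_zero] at this
    rw [← Finset.mul_sum, this, mul_zero]
  rw [z1, mul_zero, zero_add, ← mul_add, ← Finset.sum_add_distrib, Finset.sum_eq_zero, mul_zero]
  intro k hk
  obtain ⟨hk2, hks⟩ := Finset.mem_Icc.mp hk
  rw [sum_Aqnl_add_sum_Cqnl N K k hK1 hk2 (by omega), ← Finset.mul_sum, Finset.sum_comm]
  simp only [sum_rng_Dv_shift N w hper, Finset.sum_const_zero, mul_zero]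
end
end

section
/- Suppose a₂ ≤ 0 and a₃ ≤ 0. Then for every u ∈ U, Q^a(u) ≥ A^{(3)} ‖Du‖²_{ℓ²_ε} − ε² (a₂ + 2a₃) ‖D²u‖²_{ℓ²_ε}. -/
/-!
Write `d = Du`. The theorem follows from the two algebraic identities
`(x + y)² = 2x² + 2y² - (x - y)²` and
`(x + y + z)² = 3(x² + y² + z²) - (x - y)² - (y - z)² - (x - z)²`,
applied to consecutive values of `d` and summed over a period. By periodicity
(`sum_rng_shift`) the squares of `d` add up to multiples of `∑ d²`, and the squares of
nearest-neighbour differences to multiples of `ε² ∑ (D²u)²`. The `a₂` term is thus matched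
exactly, while the `a₃` term leaves the remainder `-a₃ ∑ (d_ℓ - d_{ℓ+2})²`, which is
nonnegative because `a₃ ≤ 0`.
-/

open Finset Real

noncomputable section

/-- the third-nearest-neighbor atomistic Hessian quadratic form -/
def Qa3 (N : ℕ) (a₁ a₂ a₃ : ℝ) (u : ℤ → ℝ) : ℝ :=
  eps N * ∑ ℓ ∈ rng N,
    (a₁ * (Dv N u ℓ) ^ 2
      + a₂ * (Dv N u ℓ + Dv N u (ℓ + 1)) ^ 2
      + a₃ * (Dv N u ℓ + Dv N u (ℓ + 1) + Dv N u (ℓ + 2)) ^ 2)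

/-- Sums of a `2N`-periodic sequence over one period are invariant under a unit shift. -/
theorem sum_rng_shift (N : ℕ) (f : ℤ → ℝ) (hf : Periodic2N N f) :
    ∑ ℓ ∈ rng N, f (ℓ + 1) = ∑ ℓ ∈ rng N, f ℓ := by
  -- The bijection is `ℓ ↦ ℓ + 1`, with the right endpoint `N` wrapped to `-N + 1`.
  refine Finset.sum_bij' (fun ℓ _ => if ℓ = N then -(N : ℤ) + 1 else ℓ + 1)
    (fun ℓ _ => if ℓ = -(N : ℤ) + 1 then (N : ℤ) else ℓ - 1) ?_ ?_ ?_ ?_ ?_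
  · intro ℓ h
    simp only [rng, Finset.mem_Icc] at h ⊢
    split_ifs <;> omega
  · intro ℓ h
    simp only [rng, Finset.mem_Icc] at h ⊢
    split_ifs <;> omega
  · intro ℓ h
    simp only [rng, Finset.mem_Icc] at h
    split_ifs <;> omega
  · intro ℓ h
    simp only [rng, Finset.mem_Icc] at h
    split_ifs <;> omega
  · intro ℓ h
    split_ifs with h1
    · rw [← hf (-(N : ℤ) + 1), h1]
      congr 1
      ring
    · rfl

theorem Periodic2N.Dv {N : ℕ} {v : ℤ → ℝ} (hv : Periodic2N N v) : Periodic2N N (Dv N v) := by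
  intro ℓ
  have h := hv (ℓ - 1)
  rw [show ℓ - 1 + 2 * (N : ℤ) = ℓ + 2 * N - 1 by ring] at h
  simp only [_root_.Dv, hv ℓ, h]

theorem Periodic2N.sq {N : ℕ} {v : ℤ → ℝ} (hv : Periodic2N N v) :
    Periodic2N N (fun ℓ => v ℓ ^ 2) := fun ℓ => by simp only [hv ℓ]

theorem Periodic2N.shift {N : ℕ} {v : ℤ → ℝ} (hv : Periodic2N N v) :
    Periodic2N N (fun ℓ => v (ℓ + 1)) := fun ℓ => by
  beta_reduce
  rw [← hv (ℓ + 1), show ℓ + 2 * (N : ℤ) + 1 = ℓ + 1 + 2 * N by ring]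

/-- lower bound for the third-nearest-neighbor atomistic Hessian. -/
theorem atomistic_hessian_lower_bound_3rd (N : ℕ) (hN : 0 < N)
    (a₁ a₂ a₃ : ℝ) (h2 : a₂ ≤ 0) (h3 : a₃ ≤ 0)
    (u : ℤ → ℝ) (hu : memU N u) :
    Qa3 N a₁ a₂ a₃ u ≥
      (a₁ + 4 * a₂ + 9 * a₃) * nsq N (Dv N u)
        - (eps N) ^ 2 * (a₂ + 2 * a₃) * nsq N (Dv N (Dv N u)) := by
  have hε : 0 < eps N := by
    unfold eps
    positivity
  have hpd : Periodic2N N (Dv N u) := hu.1.Dv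
  have hpe : Periodic2N N (Dv N (Dv N u)) := hpd.Dv
  have hd1 := sum_rng_shift N _ hpd.sq
  have hd2 := sum_rng_shift N _ hpd.sq.shift
  have he1 := sum_rng_shift N _ hpe.sq
  have he2 := sum_rng_shift N _ hpe.sq.shift
  have hE : ∀ ℓ, Dv N u (ℓ + 1) - Dv N u ℓ = eps N * Dv N (Dv N u) (ℓ + 1) := by
    intro ℓ
    rw [show Dv N (Dv N u) (ℓ + 1) = (Dv N u (ℓ + 1) - Dv N u (ℓ + 1 - 1)) / eps N from rfl,
      add_sub_cancel_right]
    field_simp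
  unfold Qa3 nsq
  generalize Dv N (Dv N u) = e at *
  generalize Dv N u = d at *
  simp only [add_assoc, one_add_one_eq_two] at hd2 he2 ⊢
  have key : ∑ ℓ ∈ rng N, (a₁ * d ℓ ^ 2 + a₂ * (2 * d ℓ ^ 2 + 2 * d (ℓ + 1) ^ 2
        - eps N ^ 2 * e (ℓ + 1) ^ 2)
      + a₃ * (3 * d ℓ ^ 2 + 3 * d (ℓ + 1) ^ 2 + 3 * d (ℓ + 2) ^ 2
        - eps N ^ 2 * e (ℓ + 1) ^ 2 - eps N ^ 2 * e (ℓ + 2) ^ 2))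
      ≤ ∑ ℓ ∈ rng N, (a₁ * d ℓ ^ 2 + (a₂ * (d ℓ + d (ℓ + 1)) ^ 2
        + a₃ * (d ℓ + (d (ℓ + 1) + d (ℓ + 2))) ^ 2)) := by
    refine Finset.sum_le_sum fun ℓ _ => ?_
    have h1 := hE ℓ
    have h2' := hE (ℓ + 1)
    rw [show ℓ + 1 + 1 = ℓ + 2 by ring] at h2'
    rw [← mul_pow, ← mul_pow, ← h1, ← h2']
    nlinarith [mul_nonneg (neg_nonneg.mpr h3) (sq_nonneg (d ℓ - d (ℓ + 2)))]
  simp only [Finset.sum_add_distrib, Finset.sum_sub_distrib, ← Finset.mul_sum] at key ⊢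
  rw [hd2, hd1, he2, he1] at key
  have := mul_le_mul_of_nonneg_left key hε.le
  refine ge_iff_le.mpr (le_trans (le_of_eq ?_) this)
  ring
end
end

section
/- Suppose a₂ ≤ 0 and a₃ ≤ 0. Then there exists a real number η with 2 ≤ η ≤ 6 such that: Q^a(u) > 0 for all u ∈ U with u ≠ 0 if and only if A^{(3)} − ε² μ_ε² (a₂ + η a₃) > 0, where μ_ε := 2 sin(πε/2)/ε. -/
/-!
Write `w = Du` and let `R₀ = ∑ w_ℓ²`, `R₁ = ∑ w_ℓ w_{ℓ+1}`, `R₂ = ∑ w_ℓ w_{ℓ+2}` over one period.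
Then `Q^a(u) = ε (a₁ R₀ + a₂ (2 R₀ + 2 R₁) + a₃ (3 R₀ + 4 R₁ + 2 R₂))`.  With
`s = ε² μ_ε² = 4 sin² (π / (2N))`, the theorem holds with `η = 6 - s`.

Sufficiency rests on the sharp discrete Wirtinger inequality `s ∑ v_ℓ² ≤ ∑ (v_{ℓ+1} - v_ℓ)²` for
zero-mean periodic `v` (`wirtinger`, proved with the discrete Fourier transform on `ZMod (2N)` and
Parseval's identity).  Applied to `v = w` it gives `s R₀ ≤ 2 R₀ - 2 R₁`; applied to
`v_ℓ = w_ℓ + w_{ℓ+1}` it gives `s (2 R₀ + 2 R₁) ≤ 2 R₀ - 2 R₂`.  When `N ≥ 2` one has `s ≤ 2`, and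
these two inequalities yield `Q^a(u) ≥ ε R₀ (A - s (a₂ + (6 - s) a₃))`; in Fourier terms, the symbol
`6 t - t²` on `[s, 4]` is minimal at `t = s`.  When `N = 1` the second inequality forces `R₁ = -R₀`
and there is only one mode.

Necessity: for `u_ℓ = cos (π ℓ / N)`, `w` satisfies `w_{ℓ+1} + w_{ℓ-1} = (2 - s) w_ℓ`, so that all of
these inequalities are equalities.
-/

open Finset Real

noncomputable section

/-! ### Discrete Fourier transform and the Wirtinger inequality -/

/-- Parseval's identity for the discrete Fourier transform on `ZMod n`. -/
lemma dft_parseval {n : ℕ} [NeZero n] (f : ZMod n → ℂ) :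
    ∑ k, ‖ZMod.dft f k‖ ^ 2 = n * ∑ j, ‖f j‖ ^ 2 := by
  have hconj : ∀ x : ZMod n, (starRingEnd ℂ) (ZMod.stdAddChar x) = ZMod.stdAddChar (-x) := by
    intro x
    rw [AddChar.map_neg_eq_conj]
  have key : ∑ k, (starRingEnd ℂ) (ZMod.dft f k) * ZMod.dft f k
      = n * ∑ j, (starRingEnd ℂ) (f j) * f j := by
    calc ∑ k, (starRingEnd ℂ) (ZMod.dft f k) * ZMod.dft f k
        = ∑ k, ∑ j, (starRingEnd ℂ) (f j) * (ZMod.stdAddChar (-(k * -j)) • ZMod.dft f k) := by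
          refine Finset.sum_congr rfl fun k _ => ?_
          nth_rewrite 1 [ZMod.dft_apply]
          rw [map_sum, Finset.sum_mul]
          refine Finset.sum_congr rfl fun j _ => ?_
          rw [smul_eq_mul, smul_eq_mul, map_mul, hconj, neg_neg, mul_neg, neg_neg, mul_comm j k]
          ring
      _ = ∑ j, (starRingEnd ℂ) (f j) * ZMod.dft (ZMod.dft f) (-j) := by
          rw [Finset.sum_comm]
          refine Finset.sum_congr rfl fun j _ => ?_
          rw [ZMod.dft_apply (ZMod.dft f), Finset.mul_sum]
      _ = n * ∑ j, (starRingEnd ℂ) (f j) * f j := by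
          rw [ZMod.dft_dft, Finset.mul_sum]
          refine Finset.sum_congr rfl fun j _ => ?_
          simp only [neg_neg, smul_eq_mul]
          ring
  simp only [Complex.conj_mul'] at key
  exact_mod_cast key

lemma dft_shift {n : ℕ} [NeZero n] (f : ZMod n → ℂ) (k : ZMod n) :
    ZMod.dft (fun x => f (x + 1)) k = ZMod.stdAddChar k * ZMod.dft f k := by
  rw [ZMod.dft_apply, ZMod.dft_apply, Finset.mul_sum,
    ← Equiv.sum_comp (Equiv.addRight (1 : ZMod n))
      (fun j => ZMod.stdAddChar k * ZMod.stdAddChar (-(j * k)) • f j)]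
  refine Finset.sum_congr rfl fun j _ => ?_
  simp only [Equiv.coe_addRight, smul_eq_mul]
  rw [← mul_assoc, ← AddChar.map_add_eq_mul]
  congr 2
  ring

lemma sin_pi_div_le {n k : ℕ} (hk : 0 < k) (hkn : k < n) :
    Real.sin (π / n) ≤ Real.sin (π * k / n) := by
  have hn : (0 : ℝ) < n := by exact_mod_cast hk.trans hkn
  have hk1 : (1 : ℝ) ≤ k := by exact_mod_cast hk
  have hkn1 : (k : ℝ) + 1 ≤ n := by exact_mod_cast hkn
  have hpi := Real.pi_pos
  have hpos : 0 < π / n := by positivity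
  by_cases h : 2 * (k : ℝ) ≤ n
  · refine Real.sin_le_sin_of_le_of_le_pi_div_two (by linarith) ?_ ?_
    · rw [div_le_iff₀ hn]; nlinarith
    · gcongr; nlinarith
  · rw [← Real.sin_pi_sub (π * k / n)]
    push Not at h
    have e : π - π * k / n = π * (n - k) / n := by field_simp
    rw [e]
    refine Real.sin_le_sin_of_le_of_le_pi_div_two (by linarith) ?_ ?_
    · rw [div_le_iff₀ hn]; nlinarith
    · gcongr; nlinarith

/-- The multiplier of the forward difference is bounded below on all nonzero frequencies by its
value at frequency one. -/
lemma multiplier_lower {n : ℕ} [NeZero n] {k : ZMod n} (hk : k ≠ 0) :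
    4 * Real.sin (π / n) ^ 2 ≤ ‖ZMod.stdAddChar k - (1 : ℂ)‖ ^ 2 := by
  have hv : 0 < k.val := by
    rw [Nat.pos_iff_ne_zero]; simpa [ZMod.val_eq_zero] using hk
  have h1 := sin_pi_div_le hv (ZMod.val_lt k)
  have h0 : 0 ≤ Real.sin (π / n) := by
    apply Real.sin_nonneg_of_nonneg_of_le_pi
    · positivity
    · apply div_le_self Real.pi_pos.le
      exact_mod_cast NeZero.one_le
  have e : (ZMod.stdAddChar k : ℂ) = Complex.exp (Complex.I * ((2 * (π * k.val / n) : ℝ) : ℂ)) := by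
    rw [ZMod.stdAddChar_apply, ZMod.toCircle_apply]
    congr 1
    push_cast
    ring
  rw [e, Complex.norm_exp_I_mul_ofReal_sub_one, mul_div_cancel_left₀ _ (two_ne_zero' ℝ),
    Real.norm_eq_abs, sq_abs]
  nlinarith

/-- The sharp discrete Wirtinger inequality on `ZMod n`. -/
lemma wirtinger {n : ℕ} [NeZero n] (f : ZMod n → ℝ) (hf : ∑ x, f x = 0) :
    4 * Real.sin (π / n) ^ 2 * ∑ x, f x ^ 2 ≤ ∑ x, (f (x + 1) - f x) ^ 2 := by
  have hn : (0 : ℝ) < n := by exact_mod_cast NeZero.pos n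
  have p1 := dft_parseval (fun x => (f x : ℂ))
  have p2 := dft_parseval ((fun x => (f (x + 1) : ℂ)) - fun x => (f x : ℂ))
  have hd : ∀ k, ZMod.dft ((fun x => (f (x + 1) : ℂ)) - fun x => (f x : ℂ)) k
      = (ZMod.stdAddChar k - 1) * ZMod.dft (fun x => (f x : ℂ)) k := by
    intro k
    rw [map_sub, Pi.sub_apply, dft_shift (fun x => (f x : ℂ))]
    ring
  simp only [hd, norm_mul, mul_pow, Pi.sub_apply, ← Complex.ofReal_sub, Complex.norm_real,
    Real.norm_eq_abs, sq_abs] at p1 p2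
  refine le_of_mul_le_mul_left ?_ hn
  rw [← p2, mul_left_comm, ← p1, Finset.mul_sum]
  refine Finset.sum_le_sum fun k _ => ?_
  by_cases hk : k = 0
  · have : ZMod.dft (fun x => (f x : ℂ)) k = 0 := by
      rw [hk, ZMod.dft_apply_zero]; exact_mod_cast hf
    simp [this]
  · exact mul_le_mul_of_nonneg_right (multiplier_lower hk) (by positivity)

/-! ### Autocorrelations -/

lemma sum_shift_s8 {n : ℕ} [NeZero n] (F : ZMod n → ℝ) (a : ZMod n) :
    ∑ x, F (x + a) = ∑ x, F x :=
  Equiv.sum_comp (Equiv.addRight a) F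

/-- Autocorrelation of `h` at lag `a`. -/
def corr {n : ℕ} [NeZero n] (h : ZMod n → ℝ) (a : ZMod n) : ℝ := ∑ x, h x * h (x + a)

lemma corr_shift {n : ℕ} [NeZero n] (h : ZMod n → ℝ) (a b : ZMod n) :
    ∑ x, h (x + a) * h (x + a + b) = corr h b :=
  sum_shift_s8 (fun x => h x * h (x + b)) a

lemma sum_diff_sq {n : ℕ} [NeZero n] (h : ZMod n → ℝ) :
    ∑ x, (h (x + 1) - h x) ^ 2 = 2 * corr h 0 - 2 * corr h 1 := by
  have e1 := corr_shift h 1 0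
  simp only [corr, add_zero] at e1 ⊢
  calc _ = ∑ x, h (x + 1) * h (x + 1) + ∑ x, h x * h x - 2 * ∑ x, h x * h (x + 1) := by
        rw [Finset.mul_sum, ← Finset.sum_add_distrib, ← Finset.sum_sub_distrib]
        exact Finset.sum_congr rfl fun x _ => by ring
    _ = _ := by rw [e1]; ring

lemma corr_pair_zero {n : ℕ} [NeZero n] (h : ZMod n → ℝ) :
    corr (fun x => h x + h (x + 1)) 0 = 2 * corr h 0 + 2 * corr h 1 := by
  have e1 := corr_shift h 1 0
  simp only [corr, add_zero] at e1 ⊢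
  calc _ = ∑ x, h (x + 1) * h (x + 1) + ∑ x, h x * h x + 2 * ∑ x, h x * h (x + 1) := by
        rw [Finset.mul_sum, ← Finset.sum_add_distrib, ← Finset.sum_add_distrib]
        exact Finset.sum_congr rfl fun x _ => by ring
    _ = _ := by rw [e1]; ring

lemma add_one_one {n : ℕ} (x : ZMod n) : x + 1 + 1 = x + 2 := by ring

lemma corr_pair_one {n : ℕ} [NeZero n] (h : ZMod n → ℝ) :
    corr (fun x => h x + h (x + 1)) 1 = corr h 0 + 2 * corr h 1 + corr h 2 := by
  have e1 := corr_shift h 1 0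
  have e2 := corr_shift h 1 1
  simp only [corr, add_zero, add_one_one] at e1 e2 ⊢
  calc _ = ∑ x, h (x + 1) * h (x + 1) + ∑ x, h (x + 1) * h (x + 2) + ∑ x, h x * h (x + 1)
          + ∑ x, h x * h (x + 2) := by
        rw [← Finset.sum_add_distrib, ← Finset.sum_add_distrib, ← Finset.sum_add_distrib]
        exact Finset.sum_congr rfl fun x _ => by ring
    _ = _ := by rw [e1, e2]; ring

/-- The summed Hessian density in terms of autocorrelations. -/
lemma form_eq_corr {n : ℕ} [NeZero n] (h : ZMod n → ℝ) (a₁ a₂ a₃ : ℝ) :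
    ∑ x, (a₁ * h x ^ 2 + a₂ * (h x + h (x + 1)) ^ 2 + a₃ * (h x + h (x + 1) + h (x + 2)) ^ 2)
      = a₁ * corr h 0 + a₂ * (2 * corr h 0 + 2 * corr h 1)
        + a₃ * (3 * corr h 0 + 4 * corr h 1 + 2 * corr h 2) := by
  have e1 := corr_shift h 1 0
  have e2 := corr_shift h 1 1
  have e3 := corr_shift h 2 0
  simp only [corr, add_zero, add_one_one] at e1 e2 e3 ⊢
  calc _ = (a₁ + a₂ + a₃) * ∑ x, h x * h x + (a₂ + a₃) * ∑ x, h (x + 1) * h (x + 1)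
          + a₃ * ∑ x, h (x + 2) * h (x + 2) + 2 * (a₂ + a₃) * ∑ x, h x * h (x + 1)
          + 2 * a₃ * ∑ x, h (x + 1) * h (x + 2) + 2 * a₃ * ∑ x, h x * h (x + 2) := by
        simp only [Finset.mul_sum, ← Finset.sum_add_distrib]
        exact Finset.sum_congr rfl fun x _ => by ring
    _ = _ := by rw [e1, e2, e3]; ring

lemma corr_zero_eq {n : ℕ} [NeZero n] (h : ZMod n → ℝ) : corr h 0 = ∑ x, h x ^ 2 := by
  simp [corr, sq]

/-! ### Passage from periodic sequences to `ZMod (2N)` -/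

/-- A `2N`-periodic sequence descends to `ZMod (2N)`. -/
lemma exists_lift {N : ℕ} (hN : 0 < N) {u : ℤ → ℝ} (hu : Periodic2N N u) :
    ∃ g : ZMod (2 * N) → ℝ, ∀ l : ℤ, u l = g l := by
  have : NeZero (2 * N) := ⟨by omega⟩
  have hp : Function.Periodic u (2 * (N : ℤ)) := hu
  refine ⟨fun x => u x.val, fun l => ?_⟩
  show u l = u (((l : ZMod (2 * N)).val : ℕ) : ℤ)
  rw [ZMod.val_intCast]
  push_cast
  have := hp.int_mul (l / (2 * (N : ℤ))) (l % (2 * (N : ℤ)))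
  rw [← this, Int.cast_id, Int.emod_add_ediv_mul]

lemma sum_rng {N : ℕ} [NeZero (2 * N)] (F : ZMod (2 * N) → ℝ) :
    ∑ l ∈ rng N, F (l : ZMod (2 * N)) = ∑ x, F x := by
  have hinj : Set.InjOn (fun l : ℤ => (l : ZMod (2 * N))) (rng N) := by
    intro a ha b hb hab
    simp only [rng, Finset.coe_Icc, Set.mem_Icc] at ha hb
    have := (ZMod.intCast_eq_intCast_iff_dvd_sub a b (2 * N)).1 hab
    have h0 := Int.eq_zero_of_abs_lt_dvd this (by push_cast; rw [abs_lt]; constructor <;> omega)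
    omega
  rw [← Finset.sum_image (f := F) hinj]
  congr 1
  apply Finset.eq_univ_of_card
  rw [Finset.card_image_of_injOn hinj, ZMod.card, rng, Int.card_Icc]
  omega

/-- The strain on `ZMod (2N)` that corresponds to `Dv`. -/
def strain (N : ℕ) (g : ZMod (2 * N) → ℝ) : ZMod (2 * N) → ℝ :=
  fun x => (g x - g (x - 1)) / eps N

lemma Qa3_eq {N : ℕ} [NeZero (2 * N)] (a₁ a₂ a₃ : ℝ) {u : ℤ → ℝ} {g : ZMod (2 * N) → ℝ}
    (hg : ∀ l : ℤ, u l = g l) :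
    Qa3 N a₁ a₂ a₃ u = eps N * (a₁ * corr (strain N g) 0
        + a₂ * (2 * corr (strain N g) 0 + 2 * corr (strain N g) 1)
        + a₃ * (3 * corr (strain N g) 0 + 4 * corr (strain N g) 1 + 2 * corr (strain N g) 2)) := by
  have hw : ∀ l : ℤ, Dv N u l = strain N g l := by
    intro l
    simp [Dv, strain, hg]
  rw [← form_eq_corr, ← sum_rng, Qa3]
  simp [hw]

lemma eps_pos {N : ℕ} (hN : 0 < N) : 0 < eps N := by
  have : (0 : ℝ) < N := by exact_mod_cast hN
  unfold eps; positivity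

lemma sum_strain {N : ℕ} [NeZero (2 * N)] (g : ZMod (2 * N) → ℝ) : ∑ x, strain N g x = 0 := by
  have := sum_shift_s8 g (-1)
  simp only [strain, ← Finset.sum_div, Finset.sum_sub_distrib, sub_eq_add_neg (_ : ZMod (2 * N))]
  rw [this]; simp

lemma sin_half_pos {N : ℕ} (hN : 0 < N) : 0 < Real.sin (π / (2 * N : ℕ)) := by
  have h1 : (1 : ℝ) ≤ N := by exact_mod_cast hN
  have := Real.pi_pos
  apply Real.sin_pos_of_pos_of_lt_pi
  · positivity
  · apply div_lt_self this
    push_cast; linarith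

/-- A nonzero zero-mean displacement has nonzero strain. -/
lemma corr_strain_pos {N : ℕ} [NeZero (2 * N)] (hN : 0 < N) {g : ZMod (2 * N) → ℝ}
    (hg : ∑ x, g x = 0) (hne : ∃ x, g x ≠ 0) : 0 < corr (strain N g) 0 := by
  obtain ⟨x₀, hx₀⟩ := hne
  have hsq : 0 < ∑ x, g x ^ 2 :=
    Finset.sum_pos' (fun x _ => sq_nonneg _) ⟨x₀, Finset.mem_univ _, by positivity⟩
  have hs := sin_half_pos hN
  have he := eps_pos hN
  have e : ∑ x, (g (x + 1) - g x) ^ 2 = eps N ^ 2 * corr (strain N g) 0 := by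
    rw [corr_zero_eq, ← sum_shift_s8 (fun x => strain N g x ^ 2) 1, Finset.mul_sum]
    refine Finset.sum_congr rfl fun x _ => ?_
    simp only [strain, add_sub_cancel_right]
    field_simp
  have hW := wirtinger g hg
  rw [e] at hW
  have : 0 < eps N ^ 2 * corr (strain N g) 0 := lt_of_lt_of_le (by positivity) hW
  exact pos_of_mul_pos_right this (by positivity)

/-! ### Lower bound for the quadratic form -/

/-- The second autocorrelation bound is the Wirtinger inequality for `h x + h (x + 1)`. -/
lemma corr_bounds {n : ℕ} [NeZero n] {h : ZMod n → ℝ} (hh : ∑ x, h x = 0) :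
    4 * Real.sin (π / n) ^ 2 * corr h 0 ≤ 2 * corr h 0 - 2 * corr h 1 ∧
    4 * Real.sin (π / n) ^ 2 * (2 * corr h 0 + 2 * corr h 1) ≤ 2 * corr h 0 - 2 * corr h 2 ∧
    0 ≤ 2 * corr h 0 + 2 * corr h 1 := by
  refine ⟨?_, ?_, ?_⟩
  · rw [← sum_diff_sq, corr_zero_eq]; exact wirtinger h hh
  · have hp : ∑ x, (h x + h (x + 1)) = 0 := by
      rw [Finset.sum_add_distrib, sum_shift_s8 h 1, hh, add_zero]
    have := wirtinger (fun x => h x + h (x + 1)) hp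
    rw [sum_diff_sq (fun x => h x + h (x + 1)), ← corr_zero_eq (fun x => h x + h (x + 1)),
      corr_pair_zero, corr_pair_one] at this
    linarith
  · rw [← corr_pair_zero, corr_zero_eq]
    exact Finset.sum_nonneg fun x _ => sq_nonneg _

/-- The quadratic form is bounded below by its value on the lowest mode; this uses `a₂, a₃ ≤ 0`. -/
lemma form_lower {N : ℕ} [NeZero (2 * N)] (hN : 0 < N) {a₁ a₂ a₃ : ℝ} (h2 : a₂ ≤ 0) (h3 : a₃ ≤ 0)
    {h : ZMod (2 * N) → ℝ} (hh : ∑ x, h x = 0) {s : ℝ}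
    (hs : s = 4 * Real.sin (π / (2 * N : ℕ)) ^ 2) :
    corr h 0 * (a₁ + 4 * a₂ + 9 * a₃ - s * (a₂ + (6 - s) * a₃))
      ≤ a₁ * corr h 0 + a₂ * (2 * corr h 0 + 2 * corr h 1)
        + a₃ * (3 * corr h 0 + 4 * corr h 1 + 2 * corr h 2) := by
  obtain ⟨b1, b2, b3⟩ := corr_bounds hh
  rw [← hs] at b1 b2
  have k2 : a₂ * (2 * corr h 0 - 2 * corr h 1 - s * corr h 0) ≤ 0 :=
    mul_nonpos_of_nonpos_of_nonneg h2 (by linarith)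
  suffices k3 : 3 * corr h 0 + 4 * corr h 1 + 2 * corr h 2
      ≤ (9 - s * (6 - s)) * corr h 0 by
    nlinarith [mul_le_mul_of_nonpos_left k3 h3]
  rcases Nat.lt_or_ge N 2 with hN2 | hN2
  · obtain rfl : N = 1 := by omega
    have hs4 : s = 4 := by
      rw [hs]; norm_num
    have h20 : corr h 2 = corr h 0 := by
      have : (2 : ZMod (2 * 1)) = 0 := by decide
      rw [this]
    subst hs4
    linarith
  · have hs2 : s ≤ 2 := by
      have hN' : (2 : ℝ) ≤ N := by exact_mod_cast hN2
      have hpi := Real.pi_pos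
      have h1 : Real.sin (π / (2 * N : ℕ)) ≤ Real.sin (π / 4) := by
        apply Real.sin_le_sin_of_le_of_le_pi_div_two
        · have : 0 < π / (2 * N : ℕ) := by positivity
          linarith
        · linarith
        · push_cast
          apply div_le_div_of_nonneg_left hpi.le (by norm_num)
          linarith
      rw [Real.sin_pi_div_four] at h1
      have h0 := (sin_half_pos hN).le
      have hq : Real.sqrt 2 ^ 2 = 2 := Real.sq_sqrt (by norm_num)
      rw [hs]
      nlinarith
    -- With `t` the symbol of the negative Laplacian,
    -- `6 t - t² - s (6 - s) = (t - s) (4 - t) + (2 - s) (t - s)`.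
    nlinarith [mul_nonneg (by linarith : (0 : ℝ) ≤ 2 - s)
      (by linarith : 0 ≤ 2 * corr h 0 - 2 * corr h 1 - s * corr h 0)]

/-! ### The lowest Fourier mode -/

/-- The form is a multiple of `corr h 0` on solutions of the eigenvalue recurrence. -/
lemma form_eigen {n : ℕ} [NeZero n] {h : ZMod n → ℝ} {s : ℝ}
    (hh : ∀ x, h (x + 2) + h x = (2 - s) * h (x + 1)) (a₁ a₂ a₃ : ℝ) :
    a₁ * corr h 0 + a₂ * (2 * corr h 0 + 2 * corr h 1)
        + a₃ * (3 * corr h 0 + 4 * corr h 1 + 2 * corr h 2)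
      = corr h 0 * (a₁ + 4 * a₂ + 9 * a₃ - s * (a₂ + (6 - s) * a₃)) := by
  have e1 := corr_shift h 1 0
  have e2 := corr_shift h 1 1
  have r2 : corr h 2 + corr h 0 = (2 - s) * corr h 1 := by
    simp only [corr, add_zero]
    rw [Finset.mul_sum, ← Finset.sum_add_distrib]
    exact Finset.sum_congr rfl fun x _ => by linear_combination h x * hh x
  have r1 : 2 * corr h 1 = (2 - s) * corr h 0 := by
    have : ∑ x, h (x + 1) * h (x + 1 + 1) + corr h 1
        = (2 - s) * ∑ x, h (x + 1) * h (x + 1 + 0) := by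
      simp only [corr, add_zero, add_one_one]
      rw [Finset.mul_sum, ← Finset.sum_add_distrib]
      exact Finset.sum_congr rfl fun x _ => by linear_combination h (x + 1) * hh x
    rw [e1, e2] at this
    linarith
  linear_combination 2 * a₃ * r2 + (a₂ + 2 * a₃ + a₃ * (2 - s)) * r1

/-- The cosine `u_ℓ = cos (π ℓ / N)` lies in `U` and satisfies the eigenvalue recurrence. -/
lemma exists_mode {N : ℕ} [NeZero (2 * N)] (hN : 0 < N) {s : ℝ}
    (hs : s = 4 * Real.sin (π / (2 * N : ℕ)) ^ 2) :
    ∃ (u : ℤ → ℝ) (g : ZMod (2 * N) → ℝ), (∀ l : ℤ, u l = g l) ∧ memU N u ∧ u ≠ 0 ∧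
      ∀ x, g (x + 2) + g x = (2 - s) * g (x + 1) := by
  have hN0 : (N : ℝ) ≠ 0 := by positivity
  have hper : Periodic2N N (fun l : ℤ => Real.cos (π * l / N)) := by
    intro l
    have : π * ((l + 2 * (N : ℤ) : ℤ) : ℝ) / N = π * l / N + 2 * π := by
      push_cast; field_simp
    simp only [this, Real.cos_add_two_pi]
  obtain ⟨g, hg⟩ := exists_lift hN hper
  have hc : 2 * Real.cos (π / N) = 2 - s := by
    have : π / N = 2 * (π / (2 * N : ℕ)) := by push_cast; field_simp
    rw [this, Real.cos_two_mul, hs, Real.cos_sq']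
    ring
  have hrec : ∀ x, g (x + 2) + g x = (2 - s) * g (x + 1) := by
    intro x
    obtain ⟨l, rfl⟩ := ZMod.intCast_surjective x
    have i0 := hg l
    have i1 := hg (l + 1)
    have i2 := hg (l + 2)
    push_cast at i0 i1 i2
    rw [← i0, ← i1, ← i2, ← hc]
    have e0 : π * l / N = π * (l + 1) / N - π / N := by field_simp; ring
    have e2 : π * (l + 2) / N = π * (l + 1) / N + π / N := by field_simp; ring
    rw [e0, e2, Real.cos_add, Real.cos_sub]
    ring
  refine ⟨_, g, hg, ⟨hper, ?_⟩, ?_, hrec⟩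
  · -- Summing the recurrence over a period gives `s * ∑ g = 0`.
    have hsum : ∑ x, (g (x + 2) + g x) = ∑ x, (2 - s) * g (x + 1) :=
      Finset.sum_congr rfl fun x _ => hrec x
    rw [Finset.sum_add_distrib, ← Finset.mul_sum, sum_shift_s8 g 2, sum_shift_s8 g 1] at hsum
    have hs0 : s ≠ 0 := by
      have := sin_half_pos hN
      rw [hs]; positivity
    have : s * ∑ x, g x = 0 := by linarith
    simp only [hg]
    rw [sum_rng g]
    exact (mul_eq_zero.1 this).resolve_left hs0
  · intro h0
    have := congrFun h0 0
    simp at this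

/-! ### Sharp stability -/

/-- sharp stability of the third-nearest-neighbor atomistic model. -/
theorem atomistic_sharp_stability_3rd (N : ℕ) (hN : 0 < N)
    (a₁ a₂ a₃ : ℝ) (h2 : a₂ ≤ 0) (h3 : a₃ ≤ 0) :
    ∃ η : ℝ, 2 ≤ η ∧ η ≤ 6 ∧
      ((∀ u : ℤ → ℝ, memU N u → u ≠ 0 → 0 < Qa3 N a₁ a₂ a₃ u) ↔
        0 < (a₁ + 4 * a₂ + 9 * a₃)
          - (eps N) ^ 2 * (2 * Real.sin (Real.pi * eps N / 2) / eps N) ^ 2 * (a₂ + η * a₃)) := by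
  have : NeZero (2 * N) := ⟨by omega⟩
  have he := eps_pos hN
  obtain ⟨s, hs⟩ : ∃ s, s = 4 * Real.sin (π / (2 * N : ℕ)) ^ 2 := ⟨_, rfl⟩
  have hmu : (eps N) ^ 2 * (2 * Real.sin (Real.pi * eps N / 2) / eps N) ^ 2 = s := by
    have harg : π * eps N / 2 = π / (2 * N : ℕ) := by
      unfold eps; push_cast; field_simp
    rw [harg, hs]
    field_simp
    ring
  have hs0 : 0 ≤ s := by rw [hs]; positivity
  have hs4 : s ≤ 4 := by
    rw [hs]; linarith [Real.sin_sq_le_one (π / (2 * N : ℕ))]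
  refine ⟨6 - s, by linarith, by linarith, ?_⟩
  rw [hmu]
  constructor
  · intro hpos
    obtain ⟨u, g, hg, hu, hne, hrec⟩ := exists_mode hN hs
    have hQ := hpos u hu hne
    have hgsum : ∑ x, g x = 0 := by
      rw [← sum_rng g, ← hu.2]
      exact Finset.sum_congr rfl fun l _ => (hg l).symm
    have hgne : ∃ x, g x ≠ 0 := by
      obtain ⟨l, hl⟩ := Function.ne_iff.1 hne
      exact ⟨l, by rw [← hg]; exact hl⟩
    have hrec' : ∀ x, strain N g (x + 2) + strain N g x = (2 - s) * strain N g (x + 1) := by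
      intro x
      have r1 := hrec x
      have r2 := hrec (x - 1)
      have i2 : x - 1 + 2 = x + 2 - 1 := by ring
      have i1 : x - 1 + 1 = x + 1 - 1 := by ring
      rw [i1, i2] at r2
      simp only [strain]
      field_simp
      linear_combination r1 - r2
    rw [Qa3_eq a₁ a₂ a₃ hg, form_eigen hrec'] at hQ
    exact pos_of_mul_pos_right (pos_of_mul_pos_right hQ he.le)
      (corr_strain_pos hN hgsum hgne).le
  · intro hA u hu hne
    obtain ⟨g, hg⟩ := exists_lift hN hu.1
    have hgsum : ∑ x, g x = 0 := by
      rw [← sum_rng g, ← hu.2]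
      exact Finset.sum_congr rfl fun l _ => (hg l).symm
    have hgne : ∃ x, g x ≠ 0 := by
      obtain ⟨l, hl⟩ := Function.ne_iff.1 hne
      exact ⟨l, by rw [← hg]; exact hl⟩
    rw [Qa3_eq a₁ a₂ a₃ hg]
    exact mul_pos he (lt_of_lt_of_le (mul_pos (corr_strain_pos hN hgsum hgne) hA)
      (form_lower hN h2 h3 (sum_strain g) hs))
end
end
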